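/- Let A be a finite-dimensional commutative ℂ-algebra of dimension n whose annihilator Ann(A) has dimension m ≠ 0. Then there exist a commutative ℂ-algebra B of dimension n − m, a ℂ-vector space V of dimension m, and a symmetric bilinear map θ : B × B → V with Ann(B) ∩ Ann(θ) = 0, such that A is isomorphic as a ℂ-algebra to the central extension B_θ, and moreover the quotient algebra A/Ann(A) is isomorphic to B. -/

import Mathlib

/-- The annihilator `Ann(A) = {x ∈ A : xA = 0}` of a (nonunital, nonassociative)
`ℂ`-algebra, as a submodule. -/
def annSub (A : Type*) [NonUnitalNonAssocRing A] [Module ℂ A] [IsScalarTower ℂ A A] :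
    Submodule ℂ A where
  carrier := {x | ∀ y, x * y = 0}
  add_mem' := by
    intro a b ha hb y
    rw [add_mul, ha y, hb y, add_zero]
  zero_mem' := fun y => zero_mul y
  smul_mem' := by
    intro c x hx y
    rw [smul_mul_assoc, hx y, smul_zero]

/-!
The product of `A` kills `Ann(A)` in both arguments, so it descends to a product
`β : A/Ann(A) × A/Ann(A) → A`. A linear splitting `A ≃ A/Ann(A) × Ann(A)` cuts `β` into its
components `μ` and `θ`, and the splitting itself becomes the isomorphism of `A` with the central
extension. Since `β` is nondegenerate, `μ` and `θ` have no common annihilator.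
-/

theorem exists_equiv_mk_eq {R M B : Type*} [Ring R] [AddCommGroup M] [Module R M] [AddCommGroup B]
    [Module R B] {N : Submodule R M} (g : (M ⧸ N) ≃ₗ[R] B) (u : B) :
    ∃ x : M, g (Submodule.Quotient.mk x) = u :=
  g.surjective.comp (Submodule.Quotient.mk_surjective N) u

section QuotKerBilin

variable {R M P B : Type*} [CommRing R] [AddCommGroup M] [Module R M] [AddCommGroup P] [Module R P]
  [AddCommGroup B] [Module R B] {β : M →ₗ[R] M →ₗ[R] P}

/-- The bilinear map induced by a reflexive `β : M × M → P` on a copy `B` of `M ⧸ ker β`. For the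
product of an algebra `A` it is the `A`-valued product on `B ≃ A/Ann(A)`. The identification `g` is
an argument so that `B` may be a coordinate space. -/
def quotKerBilin (hβ : β.IsRefl) (g : (M ⧸ β.ker) ≃ₗ[R] B) : B →ₗ[R] B →ₗ[R] P :=
  (hβ.liftQ₂ β β.ker le_rfl).compl₁₂ g.symm.toLinearMap g.symm.toLinearMap

variable (hβ : β.IsRefl) (g : (M ⧸ β.ker) ≃ₗ[R] B)

theorem quotKerBilin_mk_mk (x y : M) :
    quotKerBilin hβ g (g (Submodule.Quotient.mk x)) (g (Submodule.Quotient.mk y)) = β x y := by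
  simp [quotKerBilin]

theorem quotKerBilin_comm (hsymm : ∀ x y, β x y = β y x) (u v : B) :
    quotKerBilin hβ g u v = quotKerBilin hβ g v u := by
  obtain ⟨x, rfl⟩ := exists_equiv_mk_eq g u
  obtain ⟨y, rfl⟩ := exists_equiv_mk_eq g v
  rw [quotKerBilin_mk_mk, quotKerBilin_mk_mk, hsymm]

theorem quotKerBilin_separatingLeft : (quotKerBilin hβ g).SeparatingLeft := by
  intro u hu
  obtain ⟨x, rfl⟩ := exists_equiv_mk_eq g u
  have hx : x ∈ β.ker := LinearMap.ext fun y ↦ by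
    rw [← quotKerBilin_mk_mk hβ g, hu, LinearMap.zero_apply]
  rw [(Submodule.Quotient.mk_eq_zero _).2 hx, map_zero]

end QuotKerBilin

theorem exists_equiv_prod_of_isComplemented {R M B V : Type*} [Ring R] [AddCommGroup M] [Module R M]
    [AddCommGroup B] [Module R B] [AddCommGroup V] [Module R V] {N : Submodule R M}
    (hN : IsComplemented N) (g : (M ⧸ N) ≃ₗ[R] B) (h : N ≃ₗ[R] V) :
    ∃ e : M ≃ₗ[R] B × V, ∀ x, (e x).1 = g (Submodule.Quotient.mk x) := by
  obtain ⟨W, hW⟩ := hN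
  let f : M →ₗ[R] B := g.toLinearMap ∘ₗ N.mkQ
  let p : M →ₗ[R] V := h.toLinearMap ∘ₗ N.projectionOnto W hW
  have hf : f.range = ⊤ := LinearMap.range_eq_top.2 (exists_equiv_mk_eq g)
  have hp : p.range = ⊤ :=
    LinearMap.range_eq_top.2 (h.surjective.comp (Submodule.projectionOnto_surjective hW))
  have hfp : IsCompl f.ker p.ker := by
    rwa [LinearEquiv.ker_comp, LinearEquiv.ker_comp, N.ker_mkQ, Submodule.ker_projectionOnto]
  exact ⟨LinearMap.equivProdOfSurjectiveOfIsCompl f p hf hp hfp, fun _ ↦ rfl⟩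

theorem mul_isRefl (R A : Type*) [CommSemiring R] [NonUnitalNonAssocCommSemiring A] [Module R A]
    [SMulCommClass R A A] [IsScalarTower R A A] : (LinearMap.mul R A).IsRefl :=
  fun x y hxy ↦ (mul_comm y x).trans hxy

theorem annSub_eq_ker_mul (A : Type*) [NonUnitalNonAssocRing A] [Module ℂ A] [SMulCommClass ℂ A A]
    [IsScalarTower ℂ A A] : annSub A = (LinearMap.mul ℂ A).ker :=
  Submodule.ext fun _ ↦ ⟨fun hx ↦ LinearMap.ext hx, fun hx y ↦ LinearMap.congr_fun hx y⟩

theorem stmt0_general {R A B V : Type*} [CommRing R] [NonUnitalNonAssocCommRing A] [Module R A]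
    [SMulCommClass R A A] [IsScalarTower R A A] [AddCommGroup B] [Module R B] [AddCommGroup V]
    [Module R V] (hA : IsComplemented (LinearMap.mul R A).ker)
    (g : (A ⧸ (LinearMap.mul R A).ker) ≃ₗ[R] B) (h : (LinearMap.mul R A).ker ≃ₗ[R] V) :
    ∃ (μ : B →ₗ[R] B →ₗ[R] B) (θ : B →ₗ[R] B →ₗ[R] V),
      (∀ x y, μ x y = μ y x) ∧
      (∀ x y, θ x y = θ y x) ∧
      (∀ x, (∀ y, μ x y = 0) → (∀ y, θ x y = 0) → x = 0) ∧
      (∃ e : A ≃ₗ[R] B × V, ∀ x y : A, e (x * y) = (μ (e x).1 (e y).1, θ (e x).1 (e y).1)) ∧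
      (∀ x y : A, g (Submodule.Quotient.mk (x * y))
        = μ (g (Submodule.Quotient.mk x)) (g (Submodule.Quotient.mk y))) := by
  obtain ⟨e, he⟩ := exists_equiv_prod_of_isComplemented hA g h
  let β : B →ₗ[R] B →ₗ[R] A := quotKerBilin (mul_isRefl R A) g
  have β_mk (x y : A) : β (g (Submodule.Quotient.mk x)) (g (Submodule.Quotient.mk y)) = x * y :=
    quotKerBilin_mk_mk (mul_isRefl R A) g x y
  have β_comm (u v : B) : β u v = β v u := quotKerBilin_comm _ g mul_comm u v
  have β_sep : β.SeparatingLeft := quotKerBilin_separatingLeft _ g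
  let μ : B →ₗ[R] B →ₗ[R] B := β.compr₂ (LinearMap.fst R B V ∘ₗ e.toLinearMap)
  let θ : B →ₗ[R] B →ₗ[R] V := β.compr₂ (LinearMap.snd R B V ∘ₗ e.toLinearMap)
  have e_β (u v : B) : e (β u v) = (μ u v, θ u v) := rfl
  have μθ_comm (u v : B) : (μ u v, θ u v) = (μ v u, θ v u) := by rw [← e_β, β_comm, e_β]
  have e_mul (x y : A) : e (x * y) = (μ (e x).1 (e y).1, θ (e x).1 (e y).1) := by
    rw [← e_β, he, he, β_mk]
  refine ⟨μ, θ, fun u v ↦ congrArg Prod.fst (μθ_comm u v),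
    fun u v ↦ congrArg Prod.snd (μθ_comm u v), fun u hμ hθ ↦ ?_, ⟨e, e_mul⟩, fun x y ↦ ?_⟩
  · refine β_sep u fun v ↦ e.map_eq_zero_iff.1 ?_
    rw [e_β, hμ, hθ, Prod.mk_zero_zero]
  · rw [← he, e_mul, he, he]

/-- Every finite-dimensional commutative `ℂ`-algebra `A` of dimension `n` with annihilator of
dimension `m ≠ 0` is a central extension `B_θ` of an `(n-m)`-dimensional commutative algebra `B`
(realized on the carrier `Fin (n-m) → ℂ`, with commutative bilinear multiplication `μ`) by an
`m`-dimensional space `V = Fin m → ℂ`, via a symmetric bilinear map `θ` with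
`Ann(B) ∩ Ann(θ) = 0`; moreover `A / Ann(A) ≅ B` as algebras. -/
theorem stmt0 (A : Type) [NonUnitalNonAssocCommRing A] [Module ℂ A]
    [SMulCommClass ℂ A A] [IsScalarTower ℂ A A] [FiniteDimensional ℂ A]
    (n m : ℕ) (hn : Module.finrank ℂ A = n)
    (hm : Module.finrank ℂ (annSub A) = m) (hm0 : m ≠ 0) :
    ∃ (μ : (Fin (n - m) → ℂ) →ₗ[ℂ] (Fin (n - m) → ℂ) →ₗ[ℂ] (Fin (n - m) → ℂ))
      (θ : (Fin (n - m) → ℂ) →ₗ[ℂ] (Fin (n - m) → ℂ) →ₗ[ℂ] (Fin m → ℂ)),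
      (∀ x y, μ x y = μ y x) ∧
      (∀ x y, θ x y = θ y x) ∧
      (∀ x : Fin (n - m) → ℂ, (∀ y, μ x y = 0) → (∀ y, θ x y = 0) → x = 0) ∧
      (∃ e : A ≃ₗ[ℂ] (Fin (n - m) → ℂ) × (Fin m → ℂ),
        ∀ x y : A, e (x * y) = (μ (e x).1 (e y).1, θ (e x).1 (e y).1)) ∧
      (∃ g : (A ⧸ annSub A) ≃ₗ[ℂ] (Fin (n - m) → ℂ),
        ∀ x y : A,
          g (Submodule.Quotient.mk (x * y))
            = μ (g (Submodule.Quotient.mk x)) (g (Submodule.Quotient.mk y))) := by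
  subst hn hm
  rw [annSub_eq_ker_mul]
  obtain ⟨μ, θ, hμ, hθ, hann, he, hg⟩ := stmt0_general (exists_isCompl _)
    (Module.finBasisOfFinrankEq ℂ _ (Submodule.finrank_quotient _)).equivFun
    (Module.finBasis ℂ (LinearMap.mul ℂ A).ker).equivFun
  exact ⟨μ, θ, hμ, hθ, hann, he, _, hg⟩
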